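/- Let n ≥ 2 and let λ_1,…,λ_n be integers with 1 ≤ λ_j ≤ j for each 1 ≤ j ≤ n. Define the n-tuple of quadratic forms Q = (Q_1,…,Q_n) on ℝ^n by Q_j(ξ) = ξ_{λ_j} ξ_j, and for each 1 ≤ j ≤ n set w_j = #{1 ≤ i ≤ n : λ_i = j}. Suppose that for some exponents p, q ∈ [1,∞] there exists a finite constant C such that ‖E^Q f‖_{L^q(ℝ^{2n})} ≤ C ‖f‖_{L^p([0,1]^n)} for every measurable function f : [0,1]^n → ℂ. Then necessarily q ≥ max_j w_j + 3 and 1/p + (max_j w_j + 2)/q ≤ 1. -/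

import Mathlib

open MeasureTheory
open scoped ENNReal

/-- The extension operator associated to the quadratic surface
`S_Q = {(ξ, Q ξ) : ξ ∈ [0,1]^d} ⊆ ℝ^{d+n}`. -/
noncomputable def extOp (d n : ℕ) (Q : (Fin d → ℝ) → Fin n → ℝ)
    (f : (Fin d → ℝ) → ℂ) (x : Fin (d + n) → ℝ) : ℂ :=
  ∫ ξ in Set.Icc (0 : Fin d → ℝ) 1,
    Complex.exp (2 * (Real.pi : ℂ) * Complex.I *
      ((((∑ i : Fin d, x (Fin.castAdd n i) * ξ i) +
        ∑ j : Fin n, x (Fin.natAdd d j) * Q ξ j : ℝ)) : ℂ)) * f ξ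

/-!
Knapp examples. Cut the cube into `N` slabs of thickness `1/N` in the direction of a fixed
coordinate `ξ_m`, let `g` be the indicator of one slab, and suppose that `Q_j` is divisible by
`ξ_m ^ e_j`. A Galilean shear in `x` moves the slab to `ξ_m = 0`, where `Q_j = O(N ^ (-e_j))`. Hence
the phase is constant up to a small error for `x` in a parallelepiped of volume comparable to
`N ^ W`, where `W = ∑ e_j + 1`. There `|E g| ≳ 1/N`, so that `‖E g‖_q ≳ N ^ (W / q - 1)`, while
`‖g‖_p = N ^ (-1 / p)`; letting `N → ∞` gives `1 / p + W / q ≤ 1`, and in particular `q ≥ W`.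

Nothing is lost by adding up all `N` examples. For `q ≥ 2` the inequality
`2 (‖F‖_q ^ q + ‖G‖_q ^ q) ≤ ‖F + G‖_q ^ q + ‖F - G‖_q ^ q` yields signs for which `f = ∑ ± g_k`
satisfies `‖E f‖_q ^ q ≥ ∑ ‖E g_k‖_q ^ q ≳ N · N ^ (W - q)`. As `|f| ≤ 1`, this is bounded in `N`,
that is, `q ≥ W + 1`. For the monomials `ξ_{λ_j} ξ_j` the total order of vanishing in `ξ_m` is
`w_m + 1`.
-/

open scoped NNReal FourierTransform Matrix

section LpSigns

variable {α ι E : Type*} [MeasurableSpace α] {μ : Measure α}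
  [NormedAddCommGroup E] [InnerProductSpace ℝ E]

lemma two_mul_enorm_rpow_add_le (u v : E) {q : ℝ} (hq : 2 ≤ q) :
    2 * (‖u‖ₑ ^ q + ‖v‖ₑ ^ q) ≤ ‖u + v‖ₑ ^ q + ‖u - v‖ₑ ^ q := by
  have rpow_eq_sq_rpow (a : ℝ≥0∞) : a ^ q = (a ^ 2) ^ (q / 2) := by
    rw [← ENNReal.rpow_natCast_mul]
    congr 1
    push_cast
    ring
  have one_le : 1 ≤ q / 2 := by linarith
  have parallelogram : ‖u + v‖ₑ ^ 2 + ‖u - v‖ₑ ^ 2 = 2 * (‖u‖ₑ ^ 2 + ‖v‖ₑ ^ 2) := by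
    have : ‖u + v‖₊ ^ 2 + ‖u - v‖₊ ^ 2 = 2 * (‖u‖₊ ^ 2 + ‖v‖₊ ^ 2) :=
      NNReal.eq (by simpa using parallelogram_law_with_norm ℝ u v)
    simp only [enorm]
    exact_mod_cast this
  have mean : ‖u‖ₑ ^ 2 + ‖v‖ₑ ^ 2 = 2⁻¹ * ‖u + v‖ₑ ^ 2 + 2⁻¹ * ‖u - v‖ₑ ^ 2 := by
    rw [← mul_add, parallelogram, ENNReal.inv_mul_cancel_left (by simp) (by simp)]
  simp only [rpow_eq_sq_rpow]
  calc 2 * ((‖u‖ₑ ^ 2) ^ (q / 2) + (‖v‖ₑ ^ 2) ^ (q / 2))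
      ≤ 2 * (‖u‖ₑ ^ 2 + ‖v‖ₑ ^ 2) ^ (q / 2) := by
        gcongr
        exact ENNReal.add_rpow_le_rpow_add _ _ one_le
    _ ≤ 2 * (2⁻¹ * (‖u + v‖ₑ ^ 2) ^ (q / 2) + 2⁻¹ * (‖u - v‖ₑ ^ 2) ^ (q / 2)) := by
        rw [mean]
        gcongr
        exact ENNReal.rpow_arith_mean_le_arith_mean2_rpow _ _ _ _ ENNReal.inv_two_add_inv_two one_le
    _ = (‖u + v‖ₑ ^ 2) ^ (q / 2) + (‖u - v‖ₑ ^ 2) ^ (q / 2) := by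
        rw [← mul_add, ENNReal.mul_inv_cancel_left (by simp) (by simp)]

lemma exists_sign_eLpNorm_rpow_add_le {f g : α → E} (hf : AEStronglyMeasurable f μ)
    (hg : AEStronglyMeasurable g μ) {q : ℝ≥0} (hq : 2 ≤ q) :
    ∃ ε : ℝ, |ε| = 1 ∧
      eLpNorm f q μ ^ (q : ℝ) + eLpNorm g q μ ^ (q : ℝ) ≤ eLpNorm (f + ε • g) q μ ^ (q : ℝ) := by
  have hq0 : q ≠ 0 := (two_pos.trans_le hq).ne'
  have clarkson : 2 * (eLpNorm f q μ ^ (q : ℝ) + eLpNorm g q μ ^ (q : ℝ)) ≤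
      eLpNorm (f + g) q μ ^ (q : ℝ) + eLpNorm (f - g) q μ ^ (q : ℝ) := by
    simp only [eLpNorm_nnreal_pow_eq_lintegral hq0]
    rw [← lintegral_add_left' (hf.enorm.pow_const _),
      ← lintegral_add_left' ((hf.add hg).enorm.pow_const _), ← lintegral_const_mul' _ _ (by simp)]
    exact lintegral_mono fun x => two_mul_enorm_rpow_add_le (f x) (g x) (by exact_mod_cast hq)
  -- The right-hand side of `clarkson` is the sum over both signs, so one of them must do.
  by_contra! hlt
  have hadd := hlt 1 (by simp)
  have hsub := hlt (-1) (by simp)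
  rw [one_smul] at hadd
  rw [neg_one_smul, ← sub_eq_add_neg] at hsub
  exact (two_mul (_ : ℝ≥0∞) ▸ ENNReal.add_lt_add hadd hsub).not_ge clarkson

lemma exists_signs_sum_eLpNorm_rpow_le {F : ι → α → E} (hF : ∀ i, AEStronglyMeasurable (F i) μ)
    {q : ℝ≥0} (hq : 2 ≤ q) (s : Finset ι) :
    ∃ ε : ι → ℝ, (∀ i, |ε i| = 1) ∧
      ∑ i ∈ s, eLpNorm (F i) q μ ^ (q : ℝ) ≤ eLpNorm (∑ i ∈ s, ε i • F i) q μ ^ (q : ℝ) := by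
  classical
  induction s using Finset.induction_on with
  | empty => exact ⟨1, by simp, by simp⟩
  | insert a s ha ih =>
    obtain ⟨ε, hε, hle⟩ := ih
    obtain ⟨σ, hσ, hadd⟩ := exists_sign_eLpNorm_rpow_add_le
      (Finset.aestronglyMeasurable_sum s fun i _ => (hF i).const_smul (ε i)) (hF a) hq
    have hupdate : ∑ i ∈ s, Function.update ε a σ i • F i = ∑ i ∈ s, ε i • F i :=
      Finset.sum_congr rfl fun i hi => by
        rw [Function.update_of_ne (ne_of_mem_of_not_mem hi ha)]
    refine ⟨Function.update ε a σ, fun i => ?_, ?_⟩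
    · rcases eq_or_ne i a with rfl | hi
      · rwa [Function.update_self]
      · rw [Function.update_of_ne hi, hε i]
    · rw [Finset.sum_insert ha, Finset.sum_insert ha, hupdate, Function.update_self, add_comm,
        add_comm (σ • F a)]
      exact (add_le_add_left hle _).trans hadd

end LpSigns

section ExponentComparison

lemma nonpos_of_forall_mul_natCast_rpow_le {κ C : ℝ≥0∞} (hκ : κ ≠ 0) (hC : C ≠ ⊤) {e : ℝ}
    (h : ∀ N : ℕ, 0 < N → κ * (N : ℝ≥0∞) ^ e ≤ C) : e ≤ 0 := by
  by_contra! he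
  have hpow := (ENNReal.tendsto_rpow_at_top he).comp ENNReal.tendsto_nat_nhds_top
  have hlim := ENNReal.Tendsto.const_mul (a := κ) hpow (.inl ENNReal.top_ne_zero)
  rw [ENNReal.mul_top hκ] at hlim
  exact hC (top_le_iff.1 (le_of_tendsto hlim (Filter.eventually_atTop.2 ⟨1, h⟩)))

lemma one_div_add_div_le_one_of_toReal {p q : ℝ≥0∞} (hp : p ≠ 0) (hq : q ≠ 0) {k : ℕ}
    (h : 1 / p.toReal + k * (1 / q.toReal) ≤ 1) : 1 / p + k / q ≤ 1 := by
  have hp' : 1 / p ≠ ⊤ := by simpa using hp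
  have hq' : k / q ≠ ⊤ := ENNReal.div_ne_top (ENNReal.natCast_ne_top k) hq
  rw [← ENNReal.toReal_le_toReal (ENNReal.add_ne_top.2 ⟨hp', hq'⟩) ENNReal.one_ne_top,
    ENNReal.toReal_add hp' hq', ENNReal.toReal_div, ENNReal.toReal_div]
  simpa [div_eq_mul_inv] using h

end ExponentComparison

section Oscillation

lemma norm_fourierChar_sub_le (s t : ℝ) : ‖(𝐞 s : ℂ) - 𝐞 t‖ ≤ 2 * Real.pi * |s - t| := by
  have hfactor : (𝐞 s : ℂ) - 𝐞 t = 𝐞 t * (𝐞 (s - t) - 1) := by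
    rw [mul_sub, ← Circle.coe_mul, ← AddChar.map_add_eq_mul, add_sub_cancel, mul_one]
  rw [hfactor, norm_mul, Circle.norm_coe, one_mul, Real.fourierChar_apply, mul_comm]
  simpa [abs_of_pos Real.pi_pos] using
    Real.norm_exp_I_mul_ofReal_sub_one_le (x := 2 * Real.pi * (s - t))

lemma half_measureReal_le_norm_setIntegral_fourierChar {α : Type*} [MeasurableSpace α]
    {μ : Measure α} {s : Set α} (hs : μ s ≠ ⊤) {φ : α → ℝ} (hφ : Measurable φ) {θ : ℝ}
    (hclose : ∀ x ∈ s, |φ x - θ| ≤ 1 / 16) :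
    μ.real s / 2 ≤ ‖∫ x in s, (𝐞 (φ x) : ℂ) ∂μ‖ := by
  have hpointwise (x) (hx : x ∈ s) : ‖(𝐞 (φ x) : ℂ) - 𝐞 θ‖ ≤ 1 / 2 := by
    refine (norm_fourierChar_sub_le _ _).trans ?_
    nlinarith [hclose x hx, Real.pi_lt_four, Real.pi_pos]
  have hint : IntegrableOn (fun x => (𝐞 (φ x) : ℂ)) s μ :=
    Measure.integrableOn_of_bounded (M := 1) hs
      (by fun_prop) (ae_of_all _ fun x => (Circle.norm_coe _).le)
  have hdiff := norm_setIntegral_le_of_norm_le_const hs.lt_top hpointwise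
  rw [integral_sub hint (integrableOn_const hs), setIntegral_const, norm_sub_rev] at hdiff
  have htri := norm_sub_norm_le (μ.real s • (𝐞 θ : ℂ)) (∫ x in s, (𝐞 (φ x) : ℂ) ∂μ)
  rw [norm_smul, Circle.norm_coe, mul_one, Real.norm_of_nonneg measureReal_nonneg] at htri
  linarith

end Oscillation

section ExtensionOperator

variable {d n : ℕ}

/-- The phase `x · (ξ, Q ξ)` of the extension operator. -/
def phase (Q : (Fin d → ℝ) → Fin n → ℝ) (x : Fin (d + n) → ℝ) (ξ : Fin d → ℝ) : ℝ :=
  (∑ i, x (Fin.castAdd n i) * ξ i) + ∑ j, x (Fin.natAdd d j) * Q ξ j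

variable {Q : (Fin d → ℝ) → Fin n → ℝ}

lemma measurable_phase (hQ : Measurable Q) : Measurable (Function.uncurry (phase Q)) := by
  unfold Function.uncurry phase
  fun_prop

lemma extOp_eq_integral_fourierChar (f : (Fin d → ℝ) → ℂ) (x : Fin (d + n) → ℝ) :
    extOp d n Q f x = ∫ ξ in Set.Icc 0 1, (𝐞 (phase Q x ξ) : ℂ) * f ξ := by
  simp only [extOp, phase, Real.fourierChar_apply]
  congr! 4
  push_cast
  ring

lemma stronglyMeasurable_extOp (hQ : Measurable Q) {f : (Fin d → ℝ) → ℂ} (hf : Measurable f) :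
    StronglyMeasurable (extOp d n Q f) := by
  simp only [funext (extOp_eq_integral_fourierChar f)]
  have hphase := measurable_phase hQ
  exact StronglyMeasurable.integral_prod_right (by fun_prop : Measurable _).stronglyMeasurable

lemma extOp_sum_smul (hQ : Measurable Q) {ι : Type*} (s : Finset ι) (ε : ι → ℝ)
    {f : ι → (Fin d → ℝ) → ℂ} (hf : ∀ i, IntegrableOn (f i) (Set.Icc 0 1)) :
    extOp d n Q (∑ i ∈ s, ε i • f i) = ∑ i ∈ s, ε i • extOp d n Q (f i) := by
  ext x
  have hphase : Measurable (phase Q x) := (measurable_phase hQ).of_uncurry_left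
  have hint (i) : IntegrableOn (fun ξ => (𝐞 (phase Q x ξ) : ℂ) * f i ξ) (Set.Icc 0 1) :=
    (hf i).bdd_mul (c := 1) (by fun_prop) (ae_of_all _ fun ξ => (Circle.norm_coe _).le)
  simp only [Finset.sum_apply, Pi.smul_apply, extOp_eq_integral_fourierChar, Finset.mul_sum,
    mul_smul_comm, ← integral_smul]
  exact integral_finsetSum s fun i _ => (hint i).smul (ε i)

lemma extOp_indicator_one {s : Set (Fin d → ℝ)} (hs : MeasurableSet s) (hsub : s ⊆ Set.Icc 0 1)
    (x : Fin (d + n) → ℝ) :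
    extOp d n Q (s.indicator 1) x = ∫ ξ in s, (𝐞 (phase Q x ξ) : ℂ) := by
  rw [extOp_eq_integral_fourierChar, ← Set.inter_eq_right.2 hsub, ← setIntegral_indicator hs,
    Set.inter_eq_right.2 hsub]
  refine integral_congr_ae (ae_of_all _ fun ξ => ?_)
  by_cases hξ : ξ ∈ s <;> simp [hξ]

end ExtensionOperator

section Galilean

open QuadraticMap

lemma continuous_quadraticForm {E : Type*} [NormedAddCommGroup E] [NormedSpace ℝ E]
    [FiniteDimensional ℝ E] (Q : QuadraticForm ℝ E) : Continuous Q := by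
  obtain ⟨B, rfl⟩ := LinearMap.BilinMap.toQuadraticMap_surjective Q
  have hB : Continuous (LinearMap.toContinuousLinearMap.toLinearMap ∘ₗ B) :=
    LinearMap.continuous_of_finiteDimensional _
  exact hB.clm_apply continuous_id

variable {d n : ℕ}

lemma measurable_quadraticForms (Q : Fin n → QuadraticForm ℝ (Fin d → ℝ)) :
    Measurable fun ξ j => Q j ξ :=
  measurable_pi_lambda _ fun j => (continuous_quadraticForm (Q j)).measurable

/-- The Galilean shear of the `x`-space that compensates the translation `ξ ↦ ξ₀ + ξ` of the
surface: its upper right block is the derivative of `(Q₁, …, Qₙ)` at `ξ₀`, transposed. -/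
def galilean (Q : Fin n → QuadraticForm ℝ (Fin d → ℝ)) (ξ₀ : Fin d → ℝ) :
    Matrix (Fin (d + n)) (Fin (d + n)) ℝ :=
  Matrix.reindex finSumFinEquiv finSumFinEquiv
    (Matrix.fromBlocks 1 (.of fun i j => polar (Q j) ξ₀ (Pi.single i 1)) 0 1)

variable (Q : Fin n → QuadraticForm ℝ (Fin d → ℝ)) (ξ₀ : Fin d → ℝ)

lemma det_galilean : (galilean Q ξ₀).det = 1 := by
  simp [galilean]

lemma galilean_mulVec_castAdd (x : Fin (d + n) → ℝ) (i : Fin d) :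
    (galilean Q ξ₀ *ᵥ x) (Fin.castAdd n i) =
      x (Fin.castAdd n i) + ∑ j, polar (Q j) ξ₀ (Pi.single i 1) * x (Fin.natAdd d j) := by
  simp [galilean, Matrix.mulVec, dotProduct, Fin.sum_univ_add, Matrix.one_apply]

lemma galilean_mulVec_natAdd (x : Fin (d + n) → ℝ) (j : Fin n) :
    (galilean Q ξ₀ *ᵥ x) (Fin.natAdd d j) = x (Fin.natAdd d j) := by
  simp [galilean, Matrix.mulVec, dotProduct, Fin.sum_univ_add, Matrix.one_apply]

lemma volume_preimage_galilean (s : Set (Fin (d + n) → ℝ)) :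
    volume ((galilean Q ξ₀ *ᵥ ·) ⁻¹' s) = volume s := by
  have hdet : LinearMap.det (galilean Q ξ₀).toLin' = 1 := by rw [LinearMap.det_toLin', det_galilean]
  have hpre := Measure.addHaar_preimage_linearMap volume (hdet ▸ one_ne_zero) s
  rwa [hdet, inv_one, abs_one, ENNReal.ofReal_one, one_mul] at hpre

lemma polar_eq_sum_single (q : QuadraticForm ℝ (Fin d → ℝ)) (η : Fin d → ℝ) :
    polar q ξ₀ η = ∑ i, η i * polar q ξ₀ (Pi.single i 1) := by
  conv_lhs => rw [pi_eq_sum_univ' η]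
  exact (map_sum (polarBilin q ξ₀) _ _).trans <| Finset.sum_congr rfl fun i _ =>
    (polarBilin q ξ₀).map_smul (η i) (Pi.single i 1)

lemma phase_add (x : Fin (d + n) → ℝ) (η : Fin d → ℝ) :
    phase (fun ξ j => Q j ξ) x (ξ₀ + η) =
      phase (fun ξ j => Q j ξ) x ξ₀ + phase (fun ξ j => Q j ξ) (galilean Q ξ₀ *ᵥ x) η := by
  have hswap : ∑ j, x (Fin.natAdd d j) * polar (Q j) ξ₀ η =
      ∑ i, (∑ j, polar (Q j) ξ₀ (Pi.single i 1) * x (Fin.natAdd d j)) * η i := by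
    simp only [polar_eq_sum_single ξ₀ _ η, Finset.mul_sum, Finset.sum_mul]
    rw [Finset.sum_comm]
    exact Finset.sum_congr rfl fun i _ => Finset.sum_congr rfl fun j _ => by ring
  simp only [phase, galilean_mulVec_castAdd, galilean_mulVec_natAdd, Pi.add_apply,
    fun j => QuadraticMap.map_add (Q j) ξ₀ η, mul_add, add_mul, Finset.sum_add_distrib]
  rw [hswap]
  ring

end Galilean

section Slab

variable {ι : Type*} [DecidableEq ι] (m : ι) (a b : ℝ)

/-- The slab of the unit cube `[0,1]^ι` cut out by `a ≤ ξ_m < b`, the frequency support of a Knapp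
example. It is encoded as a product of intervals, so it lies in the cube only if
`[a, b) ⊆ [0, 1]`. -/
def slab : Set (ι → ℝ) :=
  Set.univ.pi (Function.update (fun _ => Set.Icc 0 1) m (Set.Ico a b))

variable {m a b}

lemma mem_slab {ξ : ι → ℝ} :
    ξ ∈ slab m a b ↔ ξ m ∈ Set.Ico a b ∧ ∀ i ≠ m, ξ i ∈ Set.Icc (0 : ℝ) 1 := by
  rw [slab, Set.mem_univ_pi]
  exact Function.forall_update_iff _ fun i s => ξ i ∈ s

lemma slab_subset_Icc (ha : 0 ≤ a) (hb : b ≤ 1) : slab m a b ⊆ Set.Icc 0 1 := by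
  intro ξ hξ
  obtain ⟨hm, hne⟩ := mem_slab.1 hξ
  have hmem (i) : ξ i ∈ Set.Icc (0 : ℝ) 1 := by
    rcases eq_or_ne i m with rfl | hi
    · exact ⟨ha.trans hm.1, hm.2.le.trans hb⟩
    · exact hne i hi
  exact ⟨fun i => (hmem i).1, fun i => (hmem i).2⟩

lemma measurableSet_slab [Countable ι] : MeasurableSet (slab m a b) := by
  refine .univ_pi ((Function.forall_update_iff _ fun _ s => MeasurableSet s).2 ⟨?_, fun _ _ => ?_⟩)
  exacts [measurableSet_Ico, measurableSet_Icc]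

lemma volume_slab [Fintype ι] : volume (slab m a b) = ENNReal.ofReal (b - a) := by
  have hside (i) : volume (Function.update (fun _ => Set.Icc (0 : ℝ) 1) m (Set.Ico a b) i) =
      Pi.mulSingle (M := fun _ => ℝ≥0∞) m (ENNReal.ofReal (b - a)) i := by
    rcases eq_or_ne i m with rfl | hi
    · simp
    · simp [hi]
  simp only [slab, volume_pi_pi, hside, Finset.prod_pi_mulSingle', Finset.mem_univ, if_true]

lemma disjoint_slab {a' b' : ℝ} (h : b ≤ a') : Disjoint (slab m a b) (slab m a' b') :=
  Set.disjoint_left.2 fun _ hξ hξ' =>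
    ((mem_slab.1 hξ).1.2.trans_le (h.trans (mem_slab.1 hξ').1.1)).false

end Slab

section Knapp

variable {d n : ℕ}

/-- `q` is bounded by `A |η_m| ^ e` on the cube `[-1,1]^d`, the quantitative form of the statement
that `η_m ^ e` divides `q`. -/
def VanishesToOrder (q : (Fin d → ℝ) → ℝ) (m : Fin d) (e : ℕ) (A : ℝ≥0) : Prop :=
  ∀ η, ‖η‖ ≤ 1 → |q η| ≤ A * |η m| ^ e

/-- Half the side lengths of the Knapp box, which is dual to a slab of thickness `L⁻¹` in the `m`-th
direction and to the set of values `(Q₁, …, Qₙ)` takes on it if `Q_j` vanishes to order `e j`. -/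
def knappRadius (m : Fin d) (e : Fin n → ℕ) (c L : ℝ) : Fin (d + n) → ℝ :=
  Fin.append (fun i => c * (Pi.mulSingle m L : Fin d → ℝ) i) fun j => c * L ^ e j

variable {m : Fin d} {e : Fin n → ℕ} {c L : ℝ}

lemma volume_Icc_knappRadius (hc : 0 ≤ c) (hL : 0 ≤ L) :
    volume (Set.Icc (-knappRadius m e c L) (knappRadius m e c L)) =
      ENNReal.ofReal ((2 * c) ^ (d + n) * L ^ (∑ j, e j + 1)) := by
  have hnonneg (k) : 0 ≤ knappRadius m e c L k := by
    refine Fin.addCases (fun i => ?_) (fun j => ?_) k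
    · simp only [knappRadius, Fin.append_left, Pi.mulSingle_apply]
      split_ifs <;> positivity
    · simp only [knappRadius, Fin.append_right]
      positivity
  have hlength (k) : knappRadius m e c L k - (-knappRadius m e c L) k =
      2 * knappRadius m e c L k := by
    rw [Pi.neg_apply]
    ring
  rw [Real.volume_Icc_pi]
  simp only [hlength]
  rw [← ENNReal.ofReal_prod_of_nonneg fun k _ => by have := hnonneg k; positivity]
  congr 1
  simp only [knappRadius, Fin.prod_univ_add, Fin.append_left, Fin.append_right,
    Finset.prod_mul_distrib, Finset.prod_const, Finset.card_univ, Fintype.card_fin,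
    Finset.prod_pi_mulSingle', Finset.mem_univ, if_true, Finset.prod_pow_eq_pow_sum]
  ring

lemma abs_phase_le_of_mem_knappBox {Q : (Fin d → ℝ) → Fin n → ℝ} {A : ℝ≥0} (hc : 0 ≤ c) (hL : 0 < L)
    (hQ : ∀ j, VanishesToOrder (Q · j) m (e j) A) {η : Fin d → ℝ} (hη : ‖η‖ ≤ 1)
    (hηm : |η m| ≤ L⁻¹) {x : Fin (d + n) → ℝ}
    (hx : x ∈ Set.Icc (-knappRadius m e c L) (knappRadius m e c L)) :
    |phase Q x η| ≤ c * (d + n * A) := by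
  have hx_abs (k) : |x k| ≤ knappRadius m e c L k := abs_le.2 ⟨hx.1 k, hx.2 k⟩
  have hlinear (i : Fin d) : |x (Fin.castAdd n i) * η i| ≤ c := by
    have hxi := hx_abs (Fin.castAdd n i)
    rw [knappRadius, Fin.append_left] at hxi
    rw [abs_mul]
    rcases eq_or_ne i m with rfl | hi
    · rw [Pi.mulSingle_eq_same] at hxi
      calc |x (Fin.castAdd n i)| * |η i| ≤ c * L * L⁻¹ := by gcongr
        _ = c := mul_inv_cancel_right₀ hL.ne' c
    · rw [Pi.mulSingle_eq_of_ne hi] at hxi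
      calc |x (Fin.castAdd n i)| * |η i| ≤ c * 1 * 1 := by
            gcongr
            exact (norm_le_pi_norm η i).trans hη
        _ = c := by rw [mul_one, mul_one]
  have hquadratic (j : Fin n) : |x (Fin.natAdd d j) * Q η j| ≤ c * A := by
    have hxj := hx_abs (Fin.natAdd d j)
    rw [knappRadius, Fin.append_right] at hxj
    calc |x (Fin.natAdd d j) * Q η j| = |x (Fin.natAdd d j)| * |Q η j| := abs_mul _ _
      _ ≤ c * L ^ e j * (A * L⁻¹ ^ e j) := by
          gcongr
          exact (hQ j η hη).trans (by gcongr)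
      _ = c * A * (L * L⁻¹) ^ e j := by rw [mul_pow]; ring
      _ = c * A := by rw [mul_inv_cancel₀ hL.ne', one_pow, mul_one]
  calc |phase Q x η| ≤ ∑ _i : Fin d, c + ∑ _j : Fin n, c * A :=
        (abs_add_le _ _).trans <| add_le_add
          ((Finset.abs_sum_le_sum_abs _ _).trans (Finset.sum_le_sum fun i _ => hlinear i))
          ((Finset.abs_sum_le_sum_abs _ _).trans (Finset.sum_le_sum fun j _ => hquadratic j))
    _ = c * (d + n * A) := by
        simp only [Finset.sum_const, Finset.card_univ, Fintype.card_fin, nsmul_eq_mul]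
        ring

lemma half_inv_le_norm_extOp_slab {Q : Fin n → QuadraticForm ℝ (Fin d → ℝ)} {A : ℝ≥0}
    (hQ : ∀ j, VanishesToOrder (Q j) m (e j) A) (hc : 0 ≤ c) (hcA : c * (d + n * A) ≤ 1 / 16)
    {a : ℝ} (ha : 0 ≤ a) (hL : 0 < L) (haL : a + L⁻¹ ≤ 1) {x : Fin (d + n) → ℝ}
    (hx : galilean Q (Pi.single m a) *ᵥ x ∈ Set.Icc (-knappRadius m e c L) (knappRadius m e c L)) :
    L⁻¹ / 2 ≤ ‖extOp d n (fun ξ j => Q j ξ) ((slab m a (a + L⁻¹)).indicator 1) x‖ := by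
  have hvol : volume (slab m a (a + L⁻¹)) = ENNReal.ofReal L⁻¹ := by
    rw [volume_slab, add_sub_cancel_left]
  have hclose (ξ) (hξ : ξ ∈ slab m a (a + L⁻¹)) :
      |phase (fun ξ j => Q j ξ) x ξ - phase (fun ξ j => Q j ξ) x (Pi.single m a)| ≤ 1 / 16 := by
    obtain ⟨η, rfl⟩ : ∃ η, ξ = Pi.single m a + η := ⟨ξ - Pi.single m a, by simp⟩
    obtain ⟨hξm, hξ⟩ := mem_slab.1 hξ
    have hηm : η m ∈ Set.Ico 0 L⁻¹ := by
      simpa only [Pi.add_apply, Pi.single_eq_same, Set.mem_Ico, le_add_iff_nonneg_right,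
        add_lt_add_iff_left] using hξm
    have hη : ‖η‖ ≤ 1 := by
      refine (pi_norm_le_iff_of_nonneg zero_le_one).2 fun i => ?_
      rcases eq_or_ne i m with rfl | hi
      · exact abs_le.2 ⟨by linarith [hηm.1], by linarith [hηm.2]⟩
      · have := hξ i hi
        rw [Pi.add_apply, Pi.single_eq_of_ne hi, zero_add] at this
        exact abs_le.2 ⟨by linarith [this.1], this.2⟩
    rw [phase_add, add_sub_cancel_left]
    exact (abs_phase_le_of_mem_knappBox hc hL hQ hη (abs_le.2 ⟨by linarith [hηm.1, hηm.2],
      hηm.2.le⟩) hx).trans hcA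
  rw [extOp_indicator_one measurableSet_slab (slab_subset_Icc ha haL)]
  refine Eq.trans_le ?_ (half_measureReal_le_norm_setIntegral_fourierChar
    (hvol ▸ ENNReal.ofReal_ne_top)
    (measurable_phase (measurable_quadraticForms Q)).of_uncurry_left hclose)
  rw [measureReal_def, hvol, ENNReal.toReal_ofReal (by positivity)]

lemma le_eLpNorm_extOp_slab {Q : Fin n → QuadraticForm ℝ (Fin d → ℝ)} {A : ℝ≥0}
    (hQ : ∀ j, VanishesToOrder (Q j) m (e j) A) (hc : 0 < c) (hcA : c * (d + n * A) ≤ 1 / 16)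
    {a : ℝ} (ha : 0 ≤ a) (hL : 0 < L) (haL : a + L⁻¹ ≤ 1) {q : ℝ≥0∞} (hq : q ≠ 0) :
    ENNReal.ofReal (L⁻¹ / 2) *
        ENNReal.ofReal ((2 * c) ^ (d + n) * L ^ (∑ j, e j + 1)) ^ (1 / q.toReal) ≤
      eLpNorm (extOp d n (fun ξ j => Q j ξ) ((slab m a (a + L⁻¹)).indicator 1)) q volume := by
  set dualBox : Set (Fin (d + n) → ℝ) := (galilean Q (Pi.single m a) *ᵥ ·) ⁻¹'
    Set.Icc (-knappRadius m e c L) (knappRadius m e c L)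
  have hvol : volume dualBox = ENNReal.ofReal ((2 * c) ^ (d + n) * L ^ (∑ j, e j + 1)) :=
    (volume_preimage_galilean _ _ _).trans (volume_Icc_knappRadius hc.le hL.le)
  have hmeas : MeasurableSet dualBox :=
    measurableSet_Icc.preimage (Continuous.matrix_mulVec continuous_const continuous_id).measurable
  have hpos : volume dualBox ≠ 0 := by
    rw [hvol]
    exact (ENNReal.ofReal_pos.2 (by positivity)).ne'
  rw [← hvol, ← Real.enorm_of_nonneg (by positivity : 0 ≤ L⁻¹ / 2),
    ← eLpNorm_indicator_const' hmeas hpos hq]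
  refine eLpNorm_mono fun x => ?_
  by_cases hx : x ∈ dualBox
  · rw [Set.indicator_of_mem hx, Real.norm_of_nonneg (by positivity)]
    exact half_inv_le_norm_extOp_slab hQ hc.le hcA ha hL haL hx
  · rw [Set.indicator_of_notMem hx, norm_zero]
    exact norm_nonneg _

end Knapp

section SlabPartition

lemma norm_sum_smul_indicator_one_le {α ι : Type*} {I : Finset ι} {s : ι → Set α} {t : Set α}
    (hdisj : (I : Set ι).PairwiseDisjoint s) (hsub : ∀ i ∈ I, s i ⊆ t) {ε : ι → ℝ}
    (hε : ∀ i, |ε i| = 1) (x : α) :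
    ‖(∑ i ∈ I, ε i • (s i).indicator (1 : α → ℂ)) x‖ ≤ t.indicator 1 x := by
  calc ‖(∑ i ∈ I, ε i • (s i).indicator (1 : α → ℂ)) x‖
      ≤ ∑ i ∈ I, ‖ε i • (s i).indicator (1 : α → ℂ) x‖ := by
        rw [Finset.sum_apply]
        exact norm_sum_le _ _
    _ = ∑ i ∈ I, (s i).indicator (1 : α → ℝ) x := by
        refine Finset.sum_congr rfl fun i _ => ?_
        rw [norm_smul, Real.norm_eq_abs, hε, one_mul, norm_indicator_eq_indicator_norm]
        simp only [Pi.one_apply, norm_one, Pi.one_def]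
    _ = (⋃ i ∈ I, s i).indicator 1 x := by
        rw [Finset.indicator_biUnion I s hdisj]
    _ ≤ t.indicator 1 x :=
        Set.indicator_le_indicator_of_subset (Set.iUnion₂_subset hsub) (fun _ => zero_le_one) x

variable {d : ℕ} (m : Fin d) {N k : ℕ}

/-- The `k`-th of the `N` slabs of thickness `N⁻¹` into which the half-open cube is cut in the
`m`-th direction; only the indices `k < N` give subsets of `[0,1]^d`. -/
def knappSlab (N k : ℕ) : Set (Fin d → ℝ) := slab m (k / N) (k / N + (N : ℝ)⁻¹)

lemma natCast_div_add_inv_le_div {k l : ℕ} (hkl : k < l) :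
    (k / N + (N : ℝ)⁻¹ : ℝ) ≤ l / N := by
  rw [← one_div, ← add_div]
  gcongr
  exact_mod_cast hkl

lemma natCast_div_add_inv_le_one (hk : k < N) : (k / N + (N : ℝ)⁻¹ : ℝ) ≤ 1 :=
  (natCast_div_add_inv_le_div hk).trans (div_self_le_one _)

lemma knappSlab_subset_Icc (hk : k < N) : knappSlab m N k ⊆ Set.Icc 0 1 :=
  slab_subset_Icc (by positivity) (natCast_div_add_inv_le_one hk)

lemma measurableSet_knappSlab : MeasurableSet (knappSlab m N k) := measurableSet_slab

lemma volume_knappSlab (hN : N ≠ 0) : volume (knappSlab m N k) = (N : ℝ≥0∞)⁻¹ := by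
  rw [knappSlab, volume_slab, add_sub_cancel_left, ENNReal.ofReal_inv_of_pos (by positivity),
    ENNReal.ofReal_natCast]

lemma pairwise_disjoint_knappSlab : Pairwise (Function.onFun Disjoint (knappSlab m N)) :=
  (pairwise_disjoint_on _).2 fun _ _ hkl => disjoint_slab (natCast_div_add_inv_le_div hkl)

/-- The superposition of the indicators of all `N` slabs with coefficients `ε`. -/
noncomputable def slabSum (N : ℕ) (ε : ℕ → ℝ) : (Fin d → ℝ) → ℂ :=
  ∑ k ∈ Finset.range N, ε k • (knappSlab m N k).indicator 1

variable {m} {ε : ℕ → ℝ}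

lemma measurable_slabSum : Measurable (slabSum m N ε) :=
  Finset.sum_induction _ Measurable (fun _ _ => .add) measurable_zero fun k _ =>
    (measurable_one.indicator (measurableSet_knappSlab m)).const_smul (ε k)

lemma norm_slabSum_le (hε : ∀ k, |ε k| = 1) (ξ : Fin d → ℝ) :
    ‖slabSum m N ε ξ‖ ≤ (Set.Icc 0 1).indicator 1 ξ :=
  norm_sum_smul_indicator_one_le ((pairwise_disjoint_knappSlab m).set_pairwise _)
    (fun _ hk => knappSlab_subset_Icc m (Finset.mem_range.1 hk)) hε ξ

lemma support_slabSum_subset (hε : ∀ k, |ε k| = 1) :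
    Function.support (slabSum m N ε) ⊆ Set.Icc 0 1 := by
  refine Function.support_subset_iff'.2 fun ξ hξ => norm_le_zero_iff.1 ?_
  simpa only [Set.indicator_of_notMem hξ] using norm_slabSum_le (m := m) (N := N) hε ξ

lemma eLpNorm_slabSum_le_one (hε : ∀ k, |ε k| = 1) (p : ℝ≥0∞) :
    eLpNorm (slabSum m N ε) p volume ≤ 1 := by
  calc eLpNorm (slabSum m N ε) p volume
      ≤ eLpNorm ((Set.Icc 0 1).indicator fun _ : Fin d → ℝ => (1 : ℝ)) p volume :=
        eLpNorm_mono_real (norm_slabSum_le hε)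
    _ ≤ ‖(1 : ℝ)‖ₑ * volume (Set.Icc (0 : Fin d → ℝ) 1) ^ (1 / p.toReal) :=
        eLpNorm_indicator_const_le _ _
    _ = 1 := by simp [Real.volume_Icc_pi]

end SlabPartition

section KnappNorm

variable {d n : ℕ} {Q : Fin n → QuadraticForm ℝ (Fin d → ℝ)} {m : Fin d} {e : Fin n → ℕ} {A : ℝ≥0}

lemma exists_mul_rpow_le_eLpNorm_extOp_knappSlab (hQ : ∀ j, VanishesToOrder (Q j) m (e j) A)
    {q : ℝ≥0∞} (hq : q ≠ 0) :
    ∃ κ : ℝ≥0∞, κ ≠ 0 ∧ ∀ N k : ℕ, k < N →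
      κ * (N : ℝ≥0∞) ^ ((∑ j, e j + 1 : ℕ) * (1 / q.toReal) - 1) ≤
        eLpNorm (extOp d n (fun ξ j => Q j ξ) ((knappSlab m N k).indicator 1)) q volume := by
  set t := 1 / q.toReal
  have ht0 : 0 ≤ t := by positivity
  set c : ℝ := 1 / (16 * (d + n * A + 1)) with hc
  have hcA : c * (d + n * A) ≤ 1 / 16 := by
    rw [hc, div_mul_eq_mul_div, one_mul, div_le_div_iff₀ (by positivity) (by positivity)]
    linarith
  refine ⟨2⁻¹ * ENNReal.ofReal ((2 * c) ^ (d + n)) ^ t, ?_, fun N k hk => ?_⟩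
  · refine mul_ne_zero (by simp) (ENNReal.rpow_pos (ENNReal.ofReal_pos.2 ?_) (by simp)).ne'
    positivity
  have hN : (0 : ℝ) < N := by exact_mod_cast Nat.zero_lt_of_lt hk
  have hN0 : (N : ℝ≥0∞) ≠ 0 := by exact_mod_cast (Nat.zero_lt_of_lt hk).ne'
  refine le_of_eq_of_le ?_ (le_eLpNorm_extOp_slab hQ (by positivity) hcA (by positivity) hN
    (natCast_div_add_inv_le_one hk) hq)
  rw [ENNReal.ofReal_mul (by positivity), ENNReal.mul_rpow_of_nonneg _ _ ht0,
    ENNReal.ofReal_pow hN.le, ENNReal.ofReal_natCast, ← ENNReal.rpow_natCast_mul,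
    div_eq_mul_inv, ENNReal.ofReal_mul (by positivity), ENNReal.ofReal_inv_of_pos hN,
    ENNReal.ofReal_natCast, ENNReal.ofReal_inv_of_pos two_pos, ENNReal.ofReal_ofNat,
    ENNReal.rpow_sub _ _ hN0 (ENNReal.natCast_ne_top N), ENNReal.rpow_one, div_eq_mul_inv]
  ring

end KnappNorm

section NecessaryConditions

variable {d n : ℕ} {m : Fin d} {p C : ℝ≥0∞}

/-- The estimate `‖E^Q f‖_q ≤ C ‖f‖_p` for all `f` on `[0,1]^d`; such an `f` is encoded as a
function on `ℝ^d` that vanishes off the cube. -/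
def ExtensionEstimate (Q : (Fin d → ℝ) → Fin n → ℝ) (p q C : ℝ≥0∞) : Prop :=
  ∀ f : (Fin d → ℝ) → ℂ, Measurable f → Function.support f ⊆ Set.Icc 0 1 →
    eLpNorm (extOp d n Q f) q volume ≤ C * eLpNorm f p volume

lemma extOp_slabSum {Q : (Fin d → ℝ) → Fin n → ℝ} (hQ : Measurable Q) (N : ℕ) (ε : ℕ → ℝ) :
    extOp d n Q (slabSum m N ε) =
      ∑ k ∈ Finset.range N, ε k • extOp d n Q ((knappSlab m N k).indicator 1) :=
  extOp_sum_smul hQ _ _ fun _ =>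
    (integrableOn_const measure_Icc_lt_top.ne).indicator (measurableSet_knappSlab m)

lemma sum_eLpNorm_rpow_le_of_extensionEstimate {Q : (Fin d → ℝ) → Fin n → ℝ}
    (hQ : Measurable Q) {q : ℝ≥0} (hq : 2 ≤ q) (hest : ExtensionEstimate Q p q C) (N : ℕ) :
    ∑ k ∈ Finset.range N,
      eLpNorm (extOp d n Q ((knappSlab m N k).indicator 1)) q volume ^ (q : ℝ) ≤ C ^ (q : ℝ) := by
  obtain ⟨ε, hε, hsigns⟩ := exists_signs_sum_eLpNorm_rpow_le
    (fun k => (stronglyMeasurable_extOp hQ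
      (measurable_one.indicator (measurableSet_knappSlab m))).aestronglyMeasurable (μ := volume))
    hq (Finset.range N)
  refine hsigns.trans ?_
  rw [← extOp_slabSum hQ]
  gcongr
  exact (hest _ measurable_slabSum (support_slabSum_subset hε)).trans
    (mul_le_of_le_one_right' (eLpNorm_slabSum_le_one hε p))

section QuadraticForms

variable {Q : Fin n → QuadraticForm ℝ (Fin d → ℝ)} {e : Fin n → ℕ} {A : ℝ≥0} {q : ℝ≥0∞}

lemma one_div_add_div_le_one_of_extensionEstimate (hQ : ∀ j, VanishesToOrder (Q j) m (e j) A)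
    (hp : p ≠ 0) (hq : q ≠ 0) (hC : C ≠ ⊤)
    (hest : ExtensionEstimate (fun ξ j => Q j ξ) p q C) :
    1 / p + (∑ j, e j + 1 : ℕ) / q ≤ 1 := by
  obtain ⟨κ, hκ, hknapp⟩ := exists_mul_rpow_le_eLpNorm_extOp_knappSlab hQ hq
  set growth : ℝ := (∑ j, e j + 1 : ℕ) * (1 / q.toReal) - 1
  have hpow (N : ℕ) (hN : 0 < N) : κ * (N : ℝ≥0∞) ^ (growth + 1 / p.toReal) ≤ C := by
    have hN0 : (N : ℝ≥0∞) ≠ 0 := by exact_mod_cast hN.ne'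
    have hNtop : (N : ℝ≥0∞) ≠ ⊤ := ENNReal.natCast_ne_top N
    have hsingle : κ * (N : ℝ≥0∞) ^ growth ≤ C * (N : ℝ≥0∞) ^ (-(1 / p.toReal)) := by
      calc κ * (N : ℝ≥0∞) ^ growth
          ≤ eLpNorm (extOp d n (fun ξ j => Q j ξ) ((knappSlab m N 0).indicator 1)) q volume :=
            hknapp N 0 hN
        _ ≤ C * eLpNorm ((knappSlab m N 0).indicator fun _ => (1 : ℂ)) p volume :=
            hest _ (measurable_one.indicator (measurableSet_knappSlab m))
              (Set.support_indicator_subset.trans (knappSlab_subset_Icc m hN))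
        _ ≤ C * (‖(1 : ℂ)‖ₑ * volume (knappSlab m N 0) ^ (1 / p.toReal)) := by
            gcongr
            exact eLpNorm_indicator_const_le _ _
        _ = C * (N : ℝ≥0∞) ^ (-(1 / p.toReal)) := by
            rw [enorm_one, one_mul, volume_knappSlab m hN.ne', ENNReal.inv_rpow,
              ENNReal.rpow_neg]
    calc κ * (N : ℝ≥0∞) ^ (growth + 1 / p.toReal)
        = κ * (N : ℝ≥0∞) ^ growth * (N : ℝ≥0∞) ^ (1 / p.toReal) := by
          rw [ENNReal.rpow_add _ _ hN0 hNtop, mul_assoc]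
      _ ≤ C * (N : ℝ≥0∞) ^ (-(1 / p.toReal)) * (N : ℝ≥0∞) ^ (1 / p.toReal) := by gcongr
      _ = C := by
          rw [mul_assoc, ← ENNReal.rpow_add _ _ hN0 hNtop, neg_add_cancel, ENNReal.rpow_zero,
            mul_one]
  have hexponent := nonpos_of_forall_mul_natCast_rpow_le hκ hC hpow
  exact one_div_add_div_le_one_of_toReal hp hq (by linarith)

lemma sum_add_one_le_of_extensionEstimate (hQ : ∀ j, VanishesToOrder (Q j) m (e j) A)
    (hp : p ≠ 0) (hq : q ≠ 0) (hC : C ≠ ⊤)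
    (hest : ExtensionEstimate (fun ξ j => Q j ξ) p q C) :
    (∑ j, e j + 1 : ℕ) ≤ q := by
  have hdiv : ((∑ j, e j + 1 : ℕ) : ℝ≥0∞) / q ≤ 1 :=
    le_add_self.trans (one_div_add_div_le_one_of_extensionEstimate hQ hp hq hC hest)
  rwa [ENNReal.div_le_iff_le_mul (.inr ENNReal.one_ne_top) (.inr one_ne_zero), one_mul] at hdiv

lemma sum_add_two_le_of_extensionEstimate (hQ : ∀ j, VanishesToOrder (Q j) m (e j) A)
    (he : ∑ j, e j ≠ 0) (hp : p ≠ 0) (hq : q ≠ 0) (hC : C ≠ ⊤)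
    (hest : ExtensionEstimate (fun ξ j => Q j ξ) p q C) :
    (∑ j, e j + 2 : ℕ) ≤ q := by
  rcases eq_or_ne q ⊤ with rfl | hqtop
  · exact le_top
  lift q to ℝ≥0 using hqtop
  have hq0 : (0 : ℝ) < q := by exact_mod_cast pos_iff_ne_zero.2 hq
  have hq2 : 2 ≤ q := by
    have hle := sum_add_one_le_of_extensionEstimate hQ hp hq hC hest
    exact le_trans (by exact_mod_cast (by omega : 2 ≤ ∑ j, e j + 1)) (ENNReal.coe_le_coe.1 hle)
  obtain ⟨κ, hκ, hknapp⟩ := exists_mul_rpow_le_eLpNorm_extOp_knappSlab hQ hq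
  set growth : ℝ := (∑ j, e j + 1 : ℕ) * (1 / (q : ℝ≥0∞).toReal) - 1 with hgrowth
  have hpow (N : ℕ) (hN : 0 < N) :
      κ ^ (q : ℝ) * (N : ℝ≥0∞) ^ (growth * q + 1) ≤ C ^ (q : ℝ) := by
    calc κ ^ (q : ℝ) * (N : ℝ≥0∞) ^ (growth * q + 1)
        = ∑ _k ∈ Finset.range N, (κ * (N : ℝ≥0∞) ^ growth) ^ (q : ℝ) := by
          rw [Finset.sum_const, Finset.card_range, nsmul_eq_mul,
            ENNReal.mul_rpow_of_nonneg _ _ hq0.le, ← ENNReal.rpow_mul,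
            ENNReal.rpow_add _ _ (by exact_mod_cast hN.ne') (ENNReal.natCast_ne_top N),
            ENNReal.rpow_one]
          ring
      _ ≤ ∑ k ∈ Finset.range N, eLpNorm (extOp d n (fun ξ j => Q j ξ)
            ((knappSlab m N k).indicator 1)) q volume ^ (q : ℝ) := by
          gcongr with k hk
          exact hknapp N k (Finset.mem_range.1 hk)
      _ ≤ C ^ (q : ℝ) :=
          sum_eLpNorm_rpow_le_of_extensionEstimate (measurable_quadraticForms Q) hq2 hest N
  have hexponent := nonpos_of_forall_mul_natCast_rpow_le
    (ENNReal.rpow_pos_of_nonneg (pos_iff_ne_zero.2 hκ) hq0.le).ne'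
    (ENNReal.rpow_ne_top_of_nonneg hq0.le hC) hpow
  have hreal : ((∑ j, e j + 2 : ℕ) : ℝ) ≤ q := by
    rw [hgrowth, ENNReal.coe_toReal, sub_mul, mul_assoc, one_div_mul_cancel hq0.ne'] at hexponent
    push_cast at hexponent ⊢
    linarith
  exact_mod_cast hreal

end QuadraticForms

lemma vanishesToOrder_mul (i l m : Fin d) :
    VanishesToOrder (fun η => η i * η l) m ((if i = m then 1 else 0) + if l = m then 1 else 0)
      1 := by
  intro η hη
  have hcoord (i : Fin d) : |η i| ≤ |η m| ^ (if i = m then 1 else 0) := by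
    split_ifs with hi
    · rw [hi, pow_one]
    · exact (norm_le_pi_norm η i).trans (by rwa [pow_zero])
  rw [abs_mul, pow_add, NNReal.coe_one, one_mul]
  exact mul_le_mul (hcoord i) (hcoord l) (abs_nonneg _) (by positivity)

theorem statement17_general {lam mu : Fin n → Fin d} {k : ℕ}
    (hk : Finset.card {j | lam j = m} + Finset.card {j | mu j = m} = k + 1)
    {q : ℝ≥0∞} (hp : p ≠ 0) (hq : q ≠ 0) (hC : C ≠ ⊤)
    (hest : ExtensionEstimate (fun ξ j => ξ (lam j) * ξ (mu j)) p q C) :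
    (k : ℝ≥0∞) + 3 ≤ q ∧ 1 / p + ((k : ℝ≥0∞) + 2) / q ≤ 1 := by
  set Q : Fin n → QuadraticForm ℝ (Fin d → ℝ) := fun j => QuadraticMap.proj (lam j) (mu j)
  have hQ (j) := vanishesToOrder_mul (lam j) (mu j) m
  have hsum : ∑ j, ((if lam j = m then 1 else 0) + if mu j = m then 1 else 0) = k + 1 := by
    rw [Finset.sum_add_distrib, ← Finset.card_filter, ← Finset.card_filter, hk]
  have hle := sum_add_two_le_of_extensionEstimate (Q := Q) hQ (by omega) hp hq hC hest
  have hdiv := one_div_add_div_le_one_of_extensionEstimate (Q := Q) hQ hp hq hC hest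
  rw [hsum] at hle hdiv
  exact ⟨by exact_mod_cast hle, by exact_mod_cast hdiv⟩

end NecessaryConditions

/-- necessary conditions for the restriction estimate for the
monomial surfaces `Q_j(ξ) = ξ_{λ_j} ξ_j` with `λ_j ≤ j` (0-indexed). -/
theorem statement17 (n : ℕ) (hn : 2 ≤ n)
    (lam : Fin n → Fin n) (hlam : ∀ j, (lam j : ℕ) ≤ (j : ℕ))
    (w : Fin n → ℕ)
    (hw : ∀ j, w j = (Finset.univ.filter (fun i => lam i = j)).card)
    (p q : ℝ≥0∞) (hp : 1 ≤ p) (hq : 1 ≤ q)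
    (C : ℝ≥0∞) (hC : C < ⊤)
    (hest : ∀ f : (Fin n → ℝ) → ℂ, Measurable f →
      Function.support f ⊆ Set.Icc 0 1 →
      eLpNorm (extOp n n (fun ξ j => ξ (lam j) * ξ j) f) q volume ≤
        C * eLpNorm f p volume) :
    ((Finset.univ.sup w : ℕ) : ℝ≥0∞) + 3 ≤ q ∧
      1 / p + (((Finset.univ.sup w : ℕ) : ℝ≥0∞) + 2) / q ≤ 1 := by
  obtain ⟨m, -, hm⟩ := Finset.exists_mem_eq_sup Finset.univ ⟨⟨0, by omega⟩, Finset.mem_univ _⟩ w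
  exact hm ▸ statement17_general (lam := lam) (mu := id) (m := m) (by simp [hw, Finset.filter_eq'])
    (one_pos.trans_le hp).ne' (one_pos.trans_le hq).ne' hC.ne hest
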